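/- arXiv:1207.3632 — 2 statements merged into one kernel-verified Lean document; each statement's English description precedes it below -/
import Mathlib

section
/- Comparison Theorem for Wronskians I: For j = 0,1,2 let a_j, b_j define Jacobi matrices J_j, and suppose J_1 − J_2 is positive semidefinite (J_1 ≥ J_2). Let λ ∈ ℝ and for each j let u_{j,−}(λ) be a solution of τ_j u = λu with u_{j,−}(λ,0) = 0 and u_{j,+}(λ) a solution with u_{j,+}(λ,N) = 0. Then #_{[0,N]}(u_{0,+}(λ), u_{2,−}(λ)) ≥ #_{[0,N]}(u_{0,+}(λ), u_{1,−}(λ)) and #_{[0,N]}(u_{0,−}(λ), u_{2,+}(λ)) ≥ #_{[0,N]}(u_{0,−}(λ), u_{1,+}(λ)), and the same inequalities hold with #_{[0,N]} replaced by #_{(0,N]}, #_{[0,N)}, or #_{(0,N)}. -/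
/-!
The proof separates the contribution of `u₀` from that of `u_j` in the Wronskian count, and reduces
the theorem to the monotonicity of node counts of Dirichlet solutions.

**Counting nodes.** In terms of Prüfer angles, `#_n(u₀,u₁)` is the increment of `⌈(θ₁ - θ₀) / π⌉`.
Without angles this reads `jSgn_eq`: `#_n` is the increment of a `{0,1}`-valued comparison of the two
reduced angles (`angleInd`) plus the node indicator of `u₁` minus that of `u₀` at `n`. The sum over
`0 ≤ n < N` telescopes (`cntCC_eq`). Since one of the two solutions vanishes at each endpoint, the
boundary terms depend on `u₀` only, and the endpoint corrections become indicators of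
`u_{j,-}(N) = 0` or `u_{j,+}(0) = 0`, or depend on `u₀` only.

**Sturm comparison.** Write `N = M + 1`. For a solution `u` with `u 0 = 0` and a sequence
`w = c u` with `w N = 0`, the discrete Jacobi identity (`qForm_eq`) gives
`⟨w, (J - λ) w⟩ = -∑ a(n) u(n) u(n+1) (c(n) - c(n+1))²`. Hence the form is nonnegative on the space cut
out by one linear condition for each node of `u` in `{1, …, M}` (`qForm_nonneg`). It is negative
definite on a space whose dimension is the number of these nodes (`qForm_neg`): take `c` constant
between nodes and, at zeros of `u`, add a small correction that makes the form strictly negative.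
If `J₁ ≥ J₂` and `u₂` had fewer nodes than `u₁`, the negative space of `u₁` would meet the nonnegative
space of `u₂` nontrivially, which is absurd (`nodes_mono`).

**The remaining variants.** Replacing `u(n)` by `(-1)^n u(n)` and `J - λ` by its negative complements
the node count, up to the indicator of `u(N) = 0`; this yields monotonicity of the node count with that
indicator added (`nodes_mono_closed`). Reflecting `n ↦ N - n` turns `u_{j,+}` into a solution that
vanishes at `0`.
-/

open Real

noncomputable section

/-- The Jacobi difference expression `(τ u)(n) = a(n)u(n+1) + a(n-1)u(n-1) + b(n)u(n)`. -/
def jTau (a b : ℤ → ℝ) (u : ℤ → ℝ) (n : ℤ) : ℝ :=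
  a n * u (n + 1) + a (n - 1) * u (n - 1) + b n * u n

/-- `u` is a solution of `τ u = z u`: not identically zero and satisfying the recursion. -/
def IsJSolution (a b : ℤ → ℝ) (z : ℝ) (u : ℤ → ℝ) : Prop :=
  u ≠ 0 ∧ ∀ n : ℤ, jTau a b u n = z * u n

/-- The (N-1)×(N-1) Jacobi matrix with diagonal b(1),…,b(N-1) and
off-diagonal a(1),…,a(N-2). -/
def jMatrix (N : ℕ) (a b : ℤ → ℝ) : Matrix (Fin (N - 1)) (Fin (N - 1)) ℝ :=
  fun i j =>
    if (i : ℕ) = (j : ℕ) then b (((i : ℕ) : ℤ) + 1)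
    else if (i : ℕ) + 1 = (j : ℕ) then a (((i : ℕ) : ℤ) + 1)
    else if (j : ℕ) + 1 = (i : ℕ) then a (((j : ℕ) : ℤ) + 1)
    else 0

/-- `μ` is an eigenvalue of the matrix `J`. -/
def IsEV {m : ℕ} (J : Matrix (Fin m) (Fin m) ℝ) (μ : ℝ) : Prop :=
  ∃ v : Fin m → ℝ, v ≠ 0 ∧ J.mulVec v = μ • v

/-- The number of eigenvalues of `J` in `Ω`. -/
def evCount {m : ℕ} (J : Matrix (Fin m) (Fin m) ℝ) (Ω : Set ℝ) : ℕ :=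
  {μ ∈ Ω | IsEV J μ}.ncard

/-- The (modified) Wronskian `W_n(u₀,u₁) = u₀(n)a₁(n)u₁(n+1) - u₁(n)a₀(n)u₀(n+1)`. -/
def jW (a0 a1 : ℤ → ℝ) (u0 u1 : ℤ → ℝ) (n : ℤ) : ℝ :=
  u0 n * a1 n * u1 (n + 1) - u1 n * a0 n * u0 (n + 1)

open Classical in
/-- The weighted node sign `#_n(u₀,u₁) ∈ {-1,0,1}` of the Wronskian at `n`. -/
def jSgn (a0 a1 u0 u1 : ℤ → ℝ) (n : ℤ) : ℤ :=
  if jW a0 a1 u0 u1 (n + 1) * u0 (n + 1) * u1 (n + 1) > 0 ∧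
      (jW a0 a1 u0 u1 n * jW a0 a1 u0 u1 (n + 1) < 0 ∨
        (jW a0 a1 u0 u1 n = 0 ∧ jW a0 a1 u0 u1 (n + 1) ≠ 0)) then 1
  else if jW a0 a1 u0 u1 n * u0 (n + 1) * u1 (n + 1) > 0 ∧
      (jW a0 a1 u0 u1 n * jW a0 a1 u0 u1 (n + 1) < 0 ∨
        (jW a0 a1 u0 u1 n ≠ 0 ∧ jW a0 a1 u0 u1 (n + 1) = 0)) then -1
  else 0

/-- `#_{[m,n]}(u₀,u₁) = Σ_{j=m}^{n-1} #_j(u₀,u₁)`. -/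
def cntCC (a0 a1 u0 u1 : ℤ → ℝ) (m n : ℤ) : ℤ :=
  ∑ j ∈ Finset.Ico m n, jSgn a0 a1 u0 u1 j

open Classical in
/-- `#_{(m,n]}(u₀,u₁)`. -/
def cntOC (a0 a1 u0 u1 : ℤ → ℝ) (m n : ℤ) : ℤ :=
  cntCC a0 a1 u0 u1 m n - if jW a0 a1 u0 u1 m = 0 then 1 else 0

open Classical in
/-- `#_{[m,n)}(u₀,u₁)`. -/
def cntCO (a0 a1 u0 u1 : ℤ → ℝ) (m n : ℤ) : ℤ :=
  cntCC a0 a1 u0 u1 m n + if jW a0 a1 u0 u1 n = 0 then 1 else 0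

open Classical in
/-- `#_{(m,n)}(u₀,u₁)`. -/
def cntOO (a0 a1 u0 u1 : ℤ → ℝ) (m n : ℤ) : ℤ :=
  cntCC a0 a1 u0 u1 m n - (if jW a0 a1 u0 u1 m = 0 then 1 else 0)
    + (if jW a0 a1 u0 u1 n = 0 then 1 else 0)

/-- `n` is a node of `u`: `u(n) = 0` or `a(n)u(n)u(n+1) > 0`. -/
def IsNode (a u : ℤ → ℝ) (n : ℤ) : Prop :=
  u n = 0 ∨ a n * u n * u (n + 1) > 0

open Classical in
/-- The number of nodes of `u` between `m` and `l`: nodes `n` with `m < n < l`,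
plus one if `m` is a node with `u(m) ≠ 0`. -/
def nodeCount (a u : ℤ → ℝ) (m l : ℤ) : ℕ :=
  ((Finset.Ioo m l).filter (fun n => IsNode a u n)).card +
    if IsNode a u m ∧ u m ≠ 0 then 1 else 0

/-- `ρ, θ` are Prüfer variables for `u` (w.r.t. the coefficient `a`). -/
def IsPrufer (a u ρ θ : ℤ → ℝ) : Prop :=
  ∀ n : ℤ, 0 < ρ n ∧ u n = ρ n * Real.sin (θ n) ∧
    -(a n) * u (n + 1) = ρ n * Real.cos (θ n) ∧
    ⌈θ n / π⌉ ≤ ⌈θ (n + 1) / π⌉ ∧ ⌈θ (n + 1) / π⌉ ≤ ⌈θ n / π⌉ + 1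

/-! ### The Wronskian count as a difference of node counts -/

open Classical in
/-- Node indicator: `1` if `u n = 0` or `u` changes sign strictly between `n` and `n + 1`. -/
def nodeInd (u : ℤ → ℝ) (n : ℤ) : ℤ :=
  if u n = 0 ∨ u n * u (n + 1) < 0 then 1 else 0

/-- A representative of the sign carried by `u` at `n`; at a zero it is the sign of `u (n - 1)`,
which for a solution is opposite to that of `u (n + 1)`. -/
def signRep (u : ℤ → ℝ) (n : ℤ) : ℝ := if u n = 0 then -u (n + 1) else u n

open Classical in
/-- Indicator of `W_n · sign u₀ · sign u₁ > 0`. In terms of Prüfer angles reduced to `(0, π]` it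
says that the angle of `u₁` exceeds that of `u₀`. -/
def angleInd (a0 a1 u0 u1 : ℤ → ℝ) (n : ℤ) : ℤ :=
  if jW a0 a1 u0 u1 n * (signRep u0 n * signRep u1 n) > 0 then 1 else 0

lemma IsJSolution.eqn {a b : ℤ → ℝ} {z : ℝ} {u : ℤ → ℝ} (h : IsJSolution a b z u) (n : ℤ) :
    a (n + 1) * u (n + 2) + a n * u n + (b (n + 1) - z) * u (n + 1) = 0 := by
  have := h.2 (n + 1)
  simp only [jTau, add_sub_cancel_right, add_assoc] at this
  norm_num at this
  linarith

lemma IsJSolution.no_double_zero {a b : ℤ → ℝ} {z : ℝ} {u : ℤ → ℝ} (h : IsJSolution a b z u)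
    (ha : ∀ n, a n < 0) (n : ℤ) (h0 : u n = 0) : u (n + 1) ≠ 0 := by
  intro h1
  apply h.1
  have key : ∀ m : ℤ, u m = 0 ∧ u (m + 1) = 0 := by
    intro m
    induction m using Int.inductionOn' (b := n) with
    | zero => exact ⟨h0, h1⟩
    | succ k _ ih =>
      refine ⟨ih.2, ?_⟩
      have e := h.eqn k
      rw [ih.1, ih.2] at e
      have : a (k + 1) * u (k + 2) = 0 := by linarith
      have := (mul_eq_zero.1 this).resolve_left (ha _).ne
      rwa [show k + 1 + 1 = k + 2 by ring]
    | pred k _ ih =>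
      have e := h.eqn (k - 1)
      rw [show k - 1 + 1 = k by ring, show k - 1 + 2 = k + 1 by ring, ih.1, ih.2] at e
      have : a (k - 1) * u (k - 1) = 0 := by linarith
      have := (mul_eq_zero.1 this).resolve_left (ha _).ne
      exact ⟨this, by rw [show k - 1 + 1 = k by ring]; exact ih.1⟩
  funext m
  exact (key m).1

open Classical in
lemma sgn_aux (W W' p : ℝ) (hp : p ≠ 0) :
    (if W' * p > 0 ∧ (W * W' < 0 ∨ (W = 0 ∧ W' ≠ 0)) then (1 : ℤ)
      else if W * p > 0 ∧ (W * W' < 0 ∨ (W ≠ 0 ∧ W' = 0)) then -1 else 0) =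
    (if W' * p > 0 then 1 else 0) - (if W * p > 0 then 1 else 0) := by
  rcases lt_trichotomy W 0 with h | h | h <;> rcases lt_trichotomy W' 0 with h' | h' | h' <;>
    rcases lt_or_gt_of_ne hp with q | q <;>
    simp [h, h', q.not_gt, h.not_gt, h'.not_gt, mul_pos_iff, mul_neg_iff, q, ne_of_gt, ne_of_lt]

/-- If `u (n + 1) ≠ 0`, then `n` is a node exactly when the sign carried by `u` flips from `n` to
`n + 1`. -/
lemma node_cases (u : ℤ → ℝ) (n : ℤ) (hy : u (n + 1) ≠ 0) :
    (nodeInd u n = 0 ∧ 0 < u n * u (n + 1) ∧ 0 < signRep u n * u (n + 1)) ∨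
    (nodeInd u n = 1 ∧ u n * u (n + 1) ≤ 0 ∧ signRep u n * u (n + 1) < 0) := by
  have hy2 : 0 < u (n + 1) * u (n + 1) := mul_self_pos.2 hy
  unfold nodeInd signRep
  by_cases h0 : u n = 0
  · right
    simp [h0]
    exact hy
  · rcases lt_or_gt_of_ne (mul_ne_zero h0 hy) with h | h
    · right; simp [h0, h, h.le]
    · left; simp [h0, h, h.not_gt]

lemma mul_pos_iff_of_same {W r p : ℝ} (h : 0 < r * p) : W * r > 0 ↔ W * p > 0 := by
  rcases pos_and_pos_or_neg_and_neg_of_mul_pos h with ⟨hr, hp⟩ | ⟨hr, hp⟩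
  · simp [hr, hp]
  · constructor <;> intro h'
    · exact mul_pos_of_neg_of_neg (neg_of_mul_pos_left h' hr.le) hp
    · exact mul_pos_of_neg_of_neg (neg_of_mul_pos_left h' hp.le) hr

/-- Local form of the count: writing `θ = k π + r` with `r ∈ (0, π]` for the Prüfer angles, this is
the increment of `⌈(θ₁ - θ₀) / π⌉ = k₁ - k₀ + [r₁ > r₀]`, expressed without angles. -/
lemma jSgn_eq {a0 b0 a1 b1 u0 u1 : ℤ → ℝ} {z : ℝ} (ha0 : ∀ n, a0 n < 0) (ha1 : ∀ n, a1 n < 0)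
    (h0 : IsJSolution a0 b0 z u0) (h1 : IsJSolution a1 b1 z u1) (n : ℤ) :
    jSgn a0 a1 u0 u1 n = angleInd a0 a1 u0 u1 (n + 1) - angleInd a0 a1 u0 u1 n
      + nodeInd u1 n - nodeInd u0 n := by
  have e0 := h0.eqn n
  have e1 := h1.eqn n
  have A0 := ha0 n
  have A1 := ha1 n
  have hW : jW a0 a1 u0 u1 n = u0 n * a1 n * u1 (n + 1) - u1 n * a0 n * u0 (n + 1) := rfl
  have hW' : jW a0 a1 u0 u1 (n + 1) =
      u0 (n + 1) * a1 (n + 1) * u1 (n + 2) - u1 (n + 1) * a0 (n + 1) * u0 (n + 2) := by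
    simp only [jW, add_assoc]; norm_num
  by_cases y0 : u0 (n + 1) = 0
  · have x0 : u0 n ≠ 0 := fun h => h0.no_double_zero ha0 n h y0
    have hx0 : 0 < u0 n * u0 n := mul_self_pos.2 x0
    have hs : jSgn a0 a1 u0 u1 n = 0 := by simp [jSgn, y0]
    have d0 : nodeInd u0 n = 0 := by simp [nodeInd, y0, x0]
    have hW2 : jW a0 a1 u0 u1 (n + 1) = u1 (n + 1) * (a0 n * u0 n) := by
      rw [hW', y0]; rw [y0] at e0; linear_combination (-u1 (n+1)) * e0
    have s0 : signRep u0 n = u0 n := by simp [signRep, x0]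
    have s0' : signRep u0 (n + 1) * (a0 (n + 1)) = a0 n * u0 n := by
      simp only [signRep, y0, if_true, add_assoc]; norm_num; rw [y0] at e0; linarith
    by_cases y1 : u1 (n + 1) = 0
    · have x1 : u1 n ≠ 0 := fun h => h1.no_double_zero ha1 n h y1
      have d1 : nodeInd u1 n = 0 := by simp [nodeInd, y1, x1]
      rw [hs, d0, d1]
      simp [angleInd, hW, hW2, y0, y1]
    · have s1' : signRep u1 (n + 1) = u1 (n + 1) := by simp [signRep, y1]
      have hy1 : 0 < u1 (n + 1) * u1 (n + 1) := mul_self_pos.2 y1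
      have F' : angleInd a0 a1 u0 u1 (n + 1) = 0 := by
        unfold angleInd
        rw [if_neg]
        rw [hW2, s1', ← s0', not_lt]
        have : u1 (n + 1) * (signRep u0 (n + 1) * a0 (n + 1)) * (signRep u0 (n + 1) * u1 (n + 1))
          = a0 (n + 1) * (u1 (n + 1) * u1 (n + 1)) * (signRep u0 (n + 1)) ^ 2 := by ring
        rw [this]
        exact mul_nonpos_of_nonpos_of_nonneg
          (mul_nonpos_of_nonpos_of_nonneg (ha0 _).le hy1.le) (sq_nonneg _)
      have hp : jW a0 a1 u0 u1 n * (signRep u0 n * signRep u1 n) =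
          (a1 n * (u0 n * u0 n)) * (signRep u1 n * u1 (n + 1)) := by
        rw [hW, s0, y0]; ring
      have hneg : a1 n * (u0 n * u0 n) < 0 := mul_neg_of_neg_of_pos A1 hx0
      rw [hs, d0, F']
      unfold angleInd
      rw [hp]
      rcases node_cases u1 n y1 with ⟨d, _, s⟩ | ⟨d, _, s⟩
      · rw [d, if_neg]; · simp
        rw [not_lt]; exact (mul_neg_of_neg_of_pos hneg s).le
      · rw [d, if_pos]; · simp
        exact mul_pos_of_neg_of_neg hneg s
  · by_cases y1 : u1 (n + 1) = 0
    · have x1 : u1 n ≠ 0 := fun h => h1.no_double_zero ha1 n h y1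
      have hx1 : 0 < u1 n * u1 n := mul_self_pos.2 x1
      have hs : jSgn a0 a1 u0 u1 n = 0 := by simp [jSgn, y1]
      have d1 : nodeInd u1 n = 0 := by simp [nodeInd, y1, x1]
      have hW2 : jW a0 a1 u0 u1 (n + 1) = -(u0 (n + 1) * (a1 n * u1 n)) := by
        rw [hW', y1]; rw [y1] at e1; linear_combination (u0 (n+1)) * e1
      have s1 : signRep u1 n = u1 n := by simp [signRep, x1]
      have s1' : signRep u1 (n + 1) * (a1 (n + 1)) = a1 n * u1 n := by
        simp only [signRep, y1, if_true, add_assoc]; norm_num; rw [y1] at e1; linarith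
      have s0' : signRep u0 (n + 1) = u0 (n + 1) := by simp [signRep, y0]
      have hy0 : 0 < u0 (n + 1) * u0 (n + 1) := mul_self_pos.2 y0
      have s1ne : signRep u1 (n + 1) ≠ 0 := by
        intro h; rw [h, zero_mul] at s1'
        exact mul_ne_zero A1.ne x1 s1'.symm
      have F' : angleInd a0 a1 u0 u1 (n + 1) = 1 := by
        unfold angleInd
        rw [if_pos]
        rw [hW2, s0', ← s1']
        have : -(u0 (n + 1) * (signRep u1 (n + 1) * a1 (n + 1)))
            * (u0 (n + 1) * signRep u1 (n + 1))
          = -a1 (n + 1) * (u0 (n + 1) * u0 (n + 1)) * (signRep u1 (n + 1)) ^ 2 := by ring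
        rw [this]
        have := ha1 (n + 1)
        have : 0 < -a1 (n + 1) := by linarith
        positivity
      have hp : jW a0 a1 u0 u1 n * (signRep u0 n * signRep u1 n) =
          (-a0 n * (u1 n * u1 n)) * (signRep u0 n * u0 (n + 1)) := by
        rw [hW, s1, y1]; ring
      have hpos : 0 < -a0 n * (u1 n * u1 n) := mul_pos (by linarith) hx1
      rw [hs, d1, F']
      unfold angleInd
      rw [hp]
      rcases node_cases u0 n y0 with ⟨d, _, s⟩ | ⟨d, _, s⟩
      · rw [d, if_pos]; · simp
        exact mul_pos hpos s
      · rw [d, if_neg]; · simp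
        rw [not_lt]; exact (mul_neg_of_pos_of_neg hpos s).le
    · have hs : jSgn a0 a1 u0 u1 n =
          (if jW a0 a1 u0 u1 (n + 1) * (u0 (n + 1) * u1 (n + 1)) > 0 then 1 else 0)
          - (if jW a0 a1 u0 u1 n * (u0 (n + 1) * u1 (n + 1)) > 0 then 1 else 0) := by
        rw [← sgn_aux _ _ _ (mul_ne_zero y0 y1)]
        simp only [jSgn, mul_assoc]
      have F' : angleInd a0 a1 u0 u1 (n + 1) =
          (if jW a0 a1 u0 u1 (n + 1) * (u0 (n + 1) * u1 (n + 1)) > 0 then 1 else 0) := by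
        simp [angleInd, signRep, y0, y1]
      have hy0 : 0 < u0 (n + 1) * u0 (n + 1) := mul_self_pos.2 y0
      have hy1 : 0 < u1 (n + 1) * u1 (n + 1) := mul_self_pos.2 y1
      have hp : jW a0 a1 u0 u1 n * (u0 (n + 1) * u1 (n + 1)) =
          a1 n * (u1 (n + 1) * u1 (n + 1)) * (u0 n * u0 (n + 1))
          + -a0 n * (u0 (n + 1) * u0 (n + 1)) * (u1 n * u1 (n + 1)) := by
        rw [hW]; ring
      have c1 : a1 n * (u1 (n + 1) * u1 (n + 1)) < 0 := mul_neg_of_neg_of_pos A1 hy1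
      have c0 : 0 < -a0 n * (u0 (n + 1) * u0 (n + 1)) := mul_pos (by linarith) hy0
      have hr : (signRep u0 n * signRep u1 n) * (u0 (n + 1) * u1 (n + 1)) =
        (signRep u0 n * u0 (n + 1)) * (signRep u1 n * u1 (n + 1)) := by ring
      rw [hs, F']
      unfold angleInd
      rcases node_cases u0 n y0 with ⟨d0, x0, s0⟩ | ⟨d0, x0, s0⟩ <;>
        rcases node_cases u1 n y1 with ⟨d1, x1, s1⟩ | ⟨d1, x1, s1⟩
      · have := mul_pos s0 s1
        rw [← hr] at this
        simp only [mul_pos_iff_of_same (W := jW a0 a1 u0 u1 n) this, d0, d1]; ring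
      · have hWp : jW a0 a1 u0 u1 n * (u0 (n + 1) * u1 (n + 1)) < 0 := by
          rw [hp]
          nlinarith [mul_neg_of_neg_of_pos c1 x0, mul_nonpos_of_nonneg_of_nonpos c0.le x1]
        have h2 := mul_neg_of_pos_of_neg s0 s1
        rw [← hr] at h2
        have h3 : 0 < -(signRep u0 n * signRep u1 n) * (u0 (n + 1) * u1 (n + 1)) := by linarith
        have h4 : jW a0 a1 u0 u1 n * (signRep u0 n * signRep u1 n) > 0 := by
          have := (mul_pos_iff_of_same (W := -jW a0 a1 u0 u1 n) h3).2 (by linarith)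
          linarith
        rw [if_pos h4, if_neg hWp.not_gt, d0, d1]; ring
      · have hWp : 0 < jW a0 a1 u0 u1 n * (u0 (n + 1) * u1 (n + 1)) := by
          rw [hp]
          nlinarith [mul_pos c0 x1, mul_nonneg_of_nonpos_of_nonpos c1.le x0]
        have h2 := mul_neg_of_neg_of_pos s0 s1
        rw [← hr] at h2
        have h3 : 0 < -(signRep u0 n * signRep u1 n) * (u0 (n + 1) * u1 (n + 1)) := by linarith
        have h4 : jW a0 a1 u0 u1 n * (signRep u0 n * signRep u1 n) < 0 := by
          have := (mul_pos_iff_of_same (W := jW a0 a1 u0 u1 n) h3).2 (by linarith)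
          linarith
        rw [if_neg h4.not_gt, if_pos hWp, d0, d1]; ring
      · have := mul_pos_of_neg_of_neg s0 s1
        rw [← hr] at this
        simp only [mul_pos_iff_of_same (W := jW a0 a1 u0 u1 n) this, d0, d1]; ring

lemma cntCC_eq {a0 b0 a1 b1 u0 u1 : ℤ → ℝ} {z : ℝ} (ha0 : ∀ n, a0 n < 0) (ha1 : ∀ n, a1 n < 0)
    (h0 : IsJSolution a0 b0 z u0) (h1 : IsJSolution a1 b1 z u1) (N : ℕ) :
    cntCC a0 a1 u0 u1 0 N = angleInd a0 a1 u0 u1 N - angleInd a0 a1 u0 u1 0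
      + (∑ k ∈ Finset.range N, nodeInd u1 k) - ∑ k ∈ Finset.range N, nodeInd u0 k := by
  have hI : ∀ f : ℤ → ℤ, ∑ j ∈ Finset.Ico (0 : ℤ) N, f j = ∑ k ∈ Finset.range N, f k := by
    intro f
    symm
    refine Finset.sum_nbij (fun k : ℕ => (k : ℤ)) ?_ ?_ ?_ ?_
    · intro k hk; simp at hk ⊢; exact hk
    · exact Nat.cast_injective.injOn
    · intro j hj
      simp only [Finset.coe_Ico, Set.mem_Ico] at hj
      refine ⟨j.toNat, ?_, ?_⟩
      · simp; omega
      · simp [hj.1]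
    · intros; rfl
  unfold cntCC
  rw [hI]
  clear hI
  induction N with
  | zero => simp
  | succ k ih =>
    rw [Finset.sum_range_succ, ih, jSgn_eq ha0 ha1 h0 h1, Finset.sum_range_succ,
      Finset.sum_range_succ]
    push_cast
    ring

/-! ### Sturm comparison for Dirichlet solutions -/

/-- The quadratic form of the Jacobi matrix with coefficients `a, b` on sequences supported in
`{1, …, M}`, where `w (M + 1) = 0` is understood. -/
def qForm (M : ℕ) (a b w : ℕ → ℝ) : ℝ :=
  ∑ n ∈ Finset.range M, (b (n + 1) * w (n + 1) ^ 2 + 2 * a (n + 1) * w (n + 1) * w (n + 2))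

/-- `u` solves the recursion with coefficients `a < 0` and `b` at `1, …, M`, has `u 0 = 0`, and no
two consecutive zeros. The spectral parameter is absorbed into `b`. -/
structure DirSol (M : ℕ) (a b u : ℕ → ℝ) : Prop where
  neg : ∀ n, a n < 0
  eqn : ∀ n < M, a (n + 1) * u (n + 2) + a n * u n + b (n + 1) * u (n + 1) = 0
  zero : u 0 = 0
  ne : ∀ n ≤ M, u n = 0 → u (n + 1) ≠ 0

open Classical in
/-- The nodes of `u` in `{1, …, M}`. -/
def nodeSet (M : ℕ) (u : ℕ → ℝ) : Finset ℕ :=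
  (Finset.Icc 1 M).filter fun n => u n = 0 ∨ u n * u (n + 1) < 0

/-- Discrete Jacobi identity: the form at `w = c u + t`, where `t` is supported on zeros of `u` at
which `c` does not jump on the left. -/
lemma qForm_eq {M : ℕ} {a b u : ℕ → ℝ} (h : DirSol M a b u) (c t w : ℕ → ℝ)
    (hw : ∀ n ≤ M + 1, w n = c n * u n + t n) (htN : t (M + 1) = 0) (hwN : w (M + 1) = 0)
    (ht : ∀ n < M, t (n + 1) ≠ 0 → u (n + 1) = 0 ∧ c n = c (n + 1))
    (htt : ∀ n < M, t (n + 1) * t (n + 2) = 0) :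
    qForm M a b w = ∑ n ∈ Finset.range M,
      (-(a (n + 1) * (u (n + 1) * u (n + 2))) * (c (n + 1) - c (n + 2)) ^ 2
        - 2 * t (n + 1) * a (n + 1) * u (n + 2) * (c (n + 1) - c (n + 2))
        + b (n + 1) * t (n + 1) ^ 2) := by
  -- telescoping boundary term
  let P : ℕ → ℝ := fun n => a n * u n * u (n + 1) * c (n + 1) ^ 2 + 2 * a n * c n * u n * t (n + 1)
  have hP0 : P 0 = 0 := by simp [P, h.zero]
  have hPM : P M = 0 := by
    have h1 : c (M + 1) * u (M + 1) = 0 := by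
      have := hw (M + 1) le_rfl
      rw [hwN, htN] at this; linarith
    simp only [P, htN]
    linear_combination (a M * u M * c (M + 1)) * h1
  have key : qForm M a b w = ∑ n ∈ Finset.range M,
      ((-(a (n + 1) * (u (n + 1) * u (n + 2))) * (c (n + 1) - c (n + 2)) ^ 2
        - 2 * t (n + 1) * a (n + 1) * u (n + 2) * (c (n + 1) - c (n + 2))
        + b (n + 1) * t (n + 1) ^ 2) + (P (n + 1) - P n)) := by
    unfold qForm
    refine Finset.sum_congr rfl fun n hn => ?_
    have hn : n < M := Finset.mem_range.1 hn
    have e := h.eqn n hn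
    have e2 := htt n hn
    rw [hw (n + 1) (by omega), hw (n + 2) (by omega)]
    simp only [P]
    by_cases t0 : t (n + 1) = 0
    · rw [t0]
      linear_combination (c (n + 1) ^ 2 * u (n + 1)) * e
    · obtain ⟨u0, c0⟩ := ht n hn t0
      rw [u0] at e ⊢
      rw [c0]
      linear_combination (2 * a (n + 1)) * e2 + (2 * c (n + 1) * t (n + 1)) * e
  rw [key, Finset.sum_add_distrib, Finset.sum_range_sub, hP0, hPM]
  ring

/-- A homogeneous linear system with fewer equations (indexed by `T`) than unknowns (indexed by `S`)
has a nonzero solution. -/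
lemma exists_kernel (S T : Finset ℕ) (hc : T.card < S.card) (G : ℕ → ℕ → ℝ) :
    ∃ e : ℕ → ℝ, (∃ m ∈ S, e m ≠ 0) ∧ (∀ m, m ∉ S → e m = 0) ∧
      ∀ i ∈ T, ∑ m ∈ S, e m * G i m = 0 := by
  classical
  let A : Matrix T S ℝ := fun i m => G i m
  have hk : LinearMap.ker A.mulVecLin ≠ ⊥ := by
    apply LinearMap.ker_ne_bot_of_finrank_lt
    simpa using hc
  obtain ⟨x, hx, hx0⟩ := (Submodule.ne_bot_iff _).1 hk
  refine ⟨fun m => if h : m ∈ S then x ⟨m, h⟩ else 0, ?_, ?_, ?_⟩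
  · obtain ⟨m, hm⟩ := Function.ne_iff.1 hx0
    exact ⟨m, m.2, by simpa using hm⟩
  · intro m hm; simp [hm]
  · intro i hi
    have := congrFun (LinearMap.mem_ker.1 hx) ⟨i, hi⟩
    change ∑ m : S, G i m * x m = 0 at this
    rw [← this, ← Finset.sum_coe_sort S]
    refine Finset.sum_congr rfl fun m _ => ?_
    simp [mul_comm]

/-- On the subspace cut out by the nodes of `u` the form is nonnegative. -/
lemma qForm_nonneg {M : ℕ} {a b u : ℕ → ℝ} (h : DirSol M a b u) (w : ℕ → ℝ)
    (w0 : w 0 = 0) (wN : w (M + 1) = 0)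
    (hw : ∀ n ∈ nodeSet M u, w n * u (n + 1) - w (n + 1) * u n = 0) : 0 ≤ qForm M a b w := by
  have hmem : ∀ n, n ∈ nodeSet M u ↔ (1 ≤ n ∧ n ≤ M) ∧ (u n = 0 ∨ u n * u (n + 1) < 0) := by
    intro n; simp [nodeSet]
  have hcu : ∀ n ≤ M + 1, w n = w n / u n * u n + 0 := by
    intro n hn
    by_cases hu : u n = 0
    · rw [hu, mul_zero, add_zero]
      rcases Nat.eq_zero_or_pos n with rfl | hn0
      · exact w0
      rcases eq_or_lt_of_le hn with rfl | hn1
      · exact wN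
      have hn2 : n ≤ M := by omega
      have := hw n ((hmem n).2 ⟨⟨hn0, hn2⟩, Or.inl hu⟩)
      rw [hu, mul_zero, sub_zero] at this
      exact (mul_eq_zero.1 this).resolve_right (h.ne n hn2 hu)
    · field_simp; ring
  rw [qForm_eq h (fun n => w n / u n) (fun _ => 0) w hcu rfl wN (by simp) (by simp)]
  refine Finset.sum_nonneg fun n hn => ?_
  have hn : n < M := Finset.mem_range.1 hn
  have ha := h.neg (n + 1)
  rcases le_or_gt 0 (u (n + 1) * u (n + 2)) with hp | hp
  · have := mul_nonneg (mul_nonneg (neg_pos.2 ha).le hp)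
      (sq_nonneg (w (n + 1) / u (n + 1) - w (n + 2) / u (n + 2)))
    linarith
  · have hc := hw (n + 1) ((hmem _).2 ⟨⟨by omega, by omega⟩, Or.inr hp⟩)
    have h1 : u (n + 1) ≠ 0 := by rintro h1; rw [h1] at hp; simp at hp
    have h2 : u (n + 2) ≠ 0 := by rintro h1; rw [h1] at hp; simp at hp
    have : w (n + 1) / u (n + 1) - w (n + 2) / u (n + 2) = 0 := by
      rw [div_sub_div _ _ h1 h2]
      rw [show n + 1 + 1 = n + 2 from rfl] at hc
      rw [div_eq_zero_iff]; left; linarith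
    simp [this]

/-- The basis vector attached to the node `m` of `u`: it is `u` truncated to `{0, …, m}`, pushed
slightly in the direction `-u (m + 1)` at `m` if `u m = 0`. -/
def nodeVec (a b u : ℕ → ℝ) (n m : ℕ) : ℝ :=
  (if n ≤ m then u n else 0) +
    (if n = m ∧ u m = 0 then -(-a m / (|b m| + 1)) * u (m + 1) else 0)

/-- The form is negative on nonzero combinations of the vectors `nodeVec`. -/
lemma qForm_neg {M : ℕ} {a b u : ℕ → ℝ} (h : DirSol M a b u) (e : ℕ → ℝ)
    (he : ∃ m ∈ nodeSet M u, e m ≠ 0) (he0 : ∀ m, m ∉ nodeSet M u → e m = 0) (w : ℕ → ℝ)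
    (hw : ∀ n, w n = ∑ m ∈ nodeSet M u, e m * nodeVec a b u n m) :
    w 0 = 0 ∧ w (M + 1) = 0 ∧ qForm M a b w < 0 := by
  have hmem : ∀ n, n ∈ nodeSet M u ↔ (1 ≤ n ∧ n ≤ M) ∧ (u n = 0 ∨ u n * u (n + 1) < 0) := by
    intro n; simp [nodeSet]
  set S := nodeSet M u with hS
  let c : ℕ → ℝ := fun n => ∑ m ∈ S, if n ≤ m then e m else 0
  let ε : ℕ → ℝ := fun m => -a m / (|b m| + 1)
  let t : ℕ → ℝ := fun n => if u n = 0 then -ε n * u (n + 1) * e n else 0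
  have hwc : ∀ n, w n = c n * u n + t n := by
    intro n
    rw [hw]
    simp only [nodeVec, mul_add, Finset.sum_add_distrib, c, t, Finset.sum_mul]
    congr 1
    · refine Finset.sum_congr rfl fun m _ => ?_
      split_ifs <;> ring
    · by_cases hn : n ∈ S
      · rw [Finset.sum_eq_single n]
        · simp only [true_and, ε]
          split_ifs <;> ring
        · intro m _ hm
          simp [Ne.symm hm]
        · intro h'; exact absurd hn h'
      · rw [he0 n hn]
        simp only [mul_zero, ite_self]
        refine Finset.sum_eq_zero fun m hm => ?_
        have : n ≠ m := by rintro rfl; exact hn hm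
        simp [this]
  have hcd : ∀ n, c n - c (n + 1) = e n := by
    intro n
    simp only [c]
    rw [← Finset.sum_sub_distrib]
    by_cases hn : n ∈ S
    · rw [Finset.sum_eq_single n]
      · simp
      · intro m _ hm
        by_cases h1 : n ≤ m
        · have : n + 1 ≤ m := by omega
          simp [h1, this]
        · have : ¬ n + 1 ≤ m := by omega
          simp [h1, this]
      · intro h'; exact absurd hn h'
    · rw [he0 n hn]
      refine Finset.sum_eq_zero fun m hm => ?_
      have hne : n ≠ m := by rintro rfl; exact hn hm
      by_cases h1 : n ≤ m
      · have : n + 1 ≤ m := by omega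
        simp [h1, this]
      · have : ¬ n + 1 ≤ m := by omega
        simp [h1, this]
  have e0 : e 0 = 0 := he0 0 (by rw [hmem]; omega)
  have eN : e (M + 1) = 0 := he0 _ (by rw [hmem]; omega)
  have tN : t (M + 1) = 0 := by simp [t, eN]
  have cN : c (M + 1) = 0 := by
    refine Finset.sum_eq_zero fun m hm => ?_
    have := (hmem m).1 hm
    rw [if_neg (by omega)]
  have w0 : w 0 = 0 := by rw [hwc]; simp [t, h.zero, e0]
  have wN : w (M + 1) = 0 := by rw [hwc, cN, tN]; ring
  refine ⟨w0, wN, ?_⟩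
  rw [qForm_eq h c t w (fun n _ => hwc n) tN wN ?_ ?_]
  rotate_left
  · intro n hn htn
    have hu : u (n + 1) = 0 := by
      by_contra hu; exact htn (by simp [t, hu])
    refine ⟨hu, ?_⟩
    have : n ∉ S := by
      rw [hmem]
      rintro ⟨-, h1 | h1⟩
      · exact h.ne n hn.le h1 hu
      · rw [hu] at h1; simp at h1
    have h2 := hcd n
    rw [he0 n this] at h2
    linarith
  · intro n hn
    by_cases hu : u (n + 1) = 0
    · have : u (n + 2) ≠ 0 := h.ne (n + 1) (by omega) hu
      have : t (n + 2) = 0 := by simp [t, this]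
      rw [this, mul_zero]
    · have : t (n + 1) = 0 := by simp [t, hu]
      rw [this, zero_mul]
  have hterm : ∀ n < M,
      (-(a (n + 1) * (u (n + 1) * u (n + 2))) * (c (n + 1) - c (n + 2)) ^ 2
        - 2 * t (n + 1) * a (n + 1) * u (n + 2) * (c (n + 1) - c (n + 2))
        + b (n + 1) * t (n + 1) ^ 2) ≤ 0 ∧ (e (n + 1) ≠ 0 →
      (-(a (n + 1) * (u (n + 1) * u (n + 2))) * (c (n + 1) - c (n + 2)) ^ 2
        - 2 * t (n + 1) * a (n + 1) * u (n + 2) * (c (n + 1) - c (n + 2))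
        + b (n + 1) * t (n + 1) ^ 2) < 0) := by
    intro n hn
    have hd : c (n + 1) - c (n + 2) = e (n + 1) := hcd (n + 1)
    rw [hd]
    by_cases hz : e (n + 1) = 0
    · have : t (n + 1) = 0 := by simp [t, hz]
      simp [hz, this]
    suffices hlt : (-(a (n + 1) * (u (n + 1) * u (n + 2))) * e (n + 1) ^ 2
        - 2 * t (n + 1) * a (n + 1) * u (n + 2) * e (n + 1)
        + b (n + 1) * t (n + 1) ^ 2) < 0 from ⟨hlt.le, fun _ => hlt⟩
    have ha := h.neg (n + 1)
    have he2 : 0 < e (n + 1) ^ 2 := by positivity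
    have hm : n + 1 ∈ S := by by_contra hm; exact hz (he0 _ hm)
    obtain ⟨_, hu | hu⟩ := (hmem _).1 hm
    · have hu2 : u (n + 2) ≠ 0 := h.ne (n + 1) (by omega) hu
      have hT : t (n + 1) = -ε (n + 1) * u (n + 2) * e (n + 1) := by simp [t, hu]
      have hb : 0 < |b (n + 1)| + 1 := by positivity
      have hε : 0 < ε (n + 1) := div_pos (by linarith) hb
      have hεb : ε (n + 1) * b (n + 1) ≤ -a (n + 1) := by
        have h1 : ε (n + 1) * (|b (n + 1)| + 1) = -a (n + 1) := by
          simp only [ε]; field_simp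
        have h2 : ε (n + 1) * b (n + 1) ≤ ε (n + 1) * |b (n + 1)| :=
          mul_le_mul_of_nonneg_left (le_abs_self _) hε.le
        linarith
      rw [hT, hu]
      have : -(a (n + 1) * (0 * u (n + 2))) * e (n + 1) ^ 2
        - 2 * (-ε (n + 1) * u (n + 2) * e (n + 1)) * a (n + 1) * u (n + 2) * e (n + 1)
        + b (n + 1) * (-ε (n + 1) * u (n + 2) * e (n + 1)) ^ 2 =
        (2 * a (n + 1) + ε (n + 1) * b (n + 1)) * (ε (n + 1) * u (n + 2) ^ 2 * e (n + 1) ^ 2) := by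
        ring
      rw [this]
      exact mul_neg_of_neg_of_pos (by linarith) (by positivity)
    · have hu1 : u (n + 1) ≠ 0 := by rintro h1; rw [h1] at hu; simp at hu
      have hT : t (n + 1) = 0 := by simp [t, hu1]
      rw [hT]
      have h1 : 0 < a (n + 1) * (u (n + 1) * u (n + 2)) := mul_pos_of_neg_of_neg ha hu
      nlinarith [mul_pos h1 he2]
  obtain ⟨m, hm, hme⟩ := he
  have hmM := (hmem m).1 hm
  apply Finset.sum_neg' (fun n hn => (hterm n (Finset.mem_range.1 hn)).1)
  refine ⟨m - 1, Finset.mem_range.2 (by omega), (hterm (m - 1) (by omega)).2 ?_⟩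
  rwa [Nat.sub_add_cancel hmM.1.1]

/-- The node count is antitone in the form. Otherwise some nonzero combination of the vectors
`nodeVec` of `u1` would satisfy the fewer linear constraints attached to the nodes of `u2`. -/
lemma nodes_mono {M : ℕ} {a1 b1 u1 a2 b2 u2 : ℕ → ℝ} (h1 : DirSol M a1 b1 u1)
    (h2 : DirSol M a2 b2 u2)
    (hQ : ∀ w : ℕ → ℝ, w 0 = 0 → w (M + 1) = 0 → qForm M a2 b2 w ≤ qForm M a1 b1 w) :
    (nodeSet M u1).card ≤ (nodeSet M u2).card := by
  by_contra! hlt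
  obtain ⟨e, he, he0, hker⟩ := exists_kernel (nodeSet M u1) (nodeSet M u2) hlt
    (fun n m => nodeVec a1 b1 u1 n m * u2 (n + 1) - nodeVec a1 b1 u1 (n + 1) m * u2 n)
  obtain ⟨w0, wN, hneg⟩ := qForm_neg h1 e he he0
    (fun n => ∑ m ∈ nodeSet M u1, e m * nodeVec a1 b1 u1 n m) (fun _ => rfl)
  have hpos := qForm_nonneg h2 (fun n => ∑ m ∈ nodeSet M u1, e m * nodeVec a1 b1 u1 n m) w0 wN
    (by
      intro n hn
      rw [← hker n hn, Finset.sum_mul, Finset.sum_mul, ← Finset.sum_sub_distrib]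
      refine Finset.sum_congr rfl fun m _ => ?_
      ring)
  linarith [hQ (fun n => ∑ m ∈ nodeSet M u1, e m * nodeVec a1 b1 u1 n m) w0 wN]

/-! ### Duality: nodes together with a zero at the right end -/

lemma alt_mul (u : ℕ → ℝ) (n : ℕ) :
    ((-1) ^ n * u n) * ((-1) ^ (n + 1) * u (n + 1)) = -(u n * u (n + 1)) := by
  have : ((-1 : ℝ) ^ n) * (-1) ^ n = 1 := by rw [← mul_pow]; simp
  rw [pow_succ]
  linear_combination (-(u n * u (n + 1))) * this

lemma DirSol.alt {M : ℕ} {a b u : ℕ → ℝ} (h : DirSol M a b u) :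
    DirSol M a (fun n => -b n) (fun n => (-1) ^ n * u n) where
  neg := h.neg
  eqn n hn := by
    have := h.eqn n hn
    simp only [pow_succ]
    linear_combination ((-1) ^ n) * this
  zero := by simp [h.zero]
  ne n hn := by
    simp only [mul_eq_zero, pow_eq_zero_iff', neg_eq_zero, one_ne_zero, false_and, false_or]
    simpa using h.ne n hn

lemma qForm_alt (M : ℕ) (a b w : ℕ → ℝ) :
    qForm M a (fun n => -b n) w = -qForm M a b (fun n => (-1) ^ n * w n) := by
  unfold qForm
  rw [← Finset.sum_neg_distrib]
  refine Finset.sum_congr rfl fun n _ => ?_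
  have h1 := alt_mul w (n + 1)
  have h2 : ((-1 : ℝ) ^ (n + 1)) ^ 2 = 1 := by rw [← pow_mul, mul_comm, pow_mul]; simp
  rw [show n + 1 + 1 = n + 2 from rfl] at h1
  linear_combination (2 * a (n + 1)) * h1 + (b (n + 1) * w (n + 1) ^ 2) * h2

lemma nodeSet_succ (M : ℕ) (u : ℕ → ℝ) : (nodeSet (M + 1) u).card =
    (nodeSet M u).card + if u (M + 1) = 0 ∨ u (M + 1) * u (M + 2) < 0 then 1 else 0 := by
  classical
  unfold nodeSet
  rw [← Finset.insert_Icc_right_eq_Icc_add_one (by omega), Finset.filter_insert]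
  split_ifs with h
  · rw [Finset.card_insert_of_notMem (by simp)]
  · rfl

open Classical in
/-- Alternating the signs exchanges sign changes and sign non-changes, while each interior zero is a
node of both sequences and makes up for the edge before it, which is a node of neither. -/
lemma nodes_add_alt (M : ℕ) (u : ℕ → ℝ) (h0 : u 0 = 0)
    (h : ∀ n ≤ M, u n = 0 → u (n + 1) ≠ 0) :
    (nodeSet M u).card + (nodeSet M (fun n => (-1) ^ n * u n)).card
      + (if u (M + 1) = 0 then 1 else 0) = M := by
  induction M with
  | zero =>
    have := h 0 le_rfl h0
    simp [nodeSet, this]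
  | succ k ih =>
    have ih := ih fun n hn => h n (by omega)
    rw [nodeSet_succ, nodeSet_succ]
    have hm := alt_mul u (k + 1)
    rw [show k + 1 + 1 = k + 2 from rfl] at hm ⊢
    rw [hm]
    have hz : ((-1 : ℝ) ^ (k + 1) * u (k + 1) = 0) ↔ u (k + 1) = 0 := by simp
    simp only [hz]
    have hk := h (k + 1) le_rfl
    by_cases z1 : u (k + 1) = 0
    · have := hk z1
      rw [show k + 1 + 1 = k + 2 from rfl] at this
      simp [z1, this] at ih ⊢
      omega
    · by_cases z2 : u (k + 2) = 0
      · simp [z1, z2] at ih ⊢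
        omega
      · rcases lt_or_gt_of_ne (mul_ne_zero z1 z2) with hp | hp
        · have := hp.not_gt
          simp only [z1, z2, hp, neg_lt_zero, this, if_true, if_false, false_or] at ih ⊢
          omega
        · have := hp.not_gt
          simp only [z1, z2, hp, neg_lt_zero, this, if_true, if_false, false_or] at ih ⊢
          omega

open Classical in
/-- `nodes_mono` applied to the sign-alternated solutions, for which the forms are negated (and so
compared in the opposite order) and the node counts are complemented. -/
lemma nodes_mono_closed {M : ℕ} {a1 b1 u1 a2 b2 u2 : ℕ → ℝ} (h1 : DirSol M a1 b1 u1)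
    (h2 : DirSol M a2 b2 u2)
    (hQ : ∀ w : ℕ → ℝ, w 0 = 0 → w (M + 1) = 0 → qForm M a2 b2 w ≤ qForm M a1 b1 w) :
    (nodeSet M u1).card + (if u1 (M + 1) = 0 then 1 else 0) ≤
      (nodeSet M u2).card + (if u2 (M + 1) = 0 then 1 else 0) := by
  have key := nodes_mono h2.alt h1.alt (fun w w0 wN => by
    rw [qForm_alt, qForm_alt]
    have := hQ (fun n => (-1) ^ n * w n) (by simp [w0]) (by simp [wN])
    linarith)
  have e1 := nodes_add_alt M u1 h1.zero h1.ne
  have e2 := nodes_add_alt M u2 h2.zero h2.ne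
  omega

/-! ### From the Jacobi matrices and solutions on `ℤ` to sequences on `ℕ` -/

open Classical in
/-- Indicator of `x = 0`. -/
def zeroInd (x : ℝ) : ℤ := if x = 0 then 1 else 0

lemma jMatrix_quad (M : ℕ) (a b : ℤ → ℝ) (w : ℕ → ℝ) (w0 : w 0 = 0) (wN : w (M + 1) = 0) :
    (fun i : Fin M => w (i + 1)) ⬝ᵥ
      (jMatrix (M + 1) a b).mulVec (fun i : Fin M => w (i + 1)) =
      qForm M (fun n => a n) (fun n => b n) w := by
  let f : ℕ → ℕ → ℝ := fun i j =>
    if i = j then b ((i : ℤ) + 1) else if i + 1 = j then a ((i : ℤ) + 1)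
    else if j + 1 = i then a ((j : ℤ) + 1) else 0
  have hf : ∀ K : ℕ, ∑ i ∈ Finset.range K, ∑ j ∈ Finset.range K, w (i + 1) * (f i j * w (j + 1))
      = qForm K (fun n => a n) (fun n => b n) w - 2 * a K * w K * w (K + 1) := by
    intro K
    induction K with
    | zero => simp [qForm, w0]
    | succ K ih =>
      have hr : ∑ i ∈ Finset.range K, w (i + 1) * (f i K * w (K + 1)) = a K * w K * w (K + 1) := by
        cases K with
        | zero => simp [w0]
        | succ k =>
          rw [Finset.sum_range_succ, Finset.sum_eq_zero]
          · simp [f]; ring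
          · intro i hi
            have hi : i < k := Finset.mem_range.1 hi
            have h1 : i ≠ k + 1 := by omega
            have h2 : i ≠ k := by omega
            have h3 : k + 1 + 1 ≠ i := by omega
            simp [f, h1, h2, h3]
      have hl : ∑ j ∈ Finset.range K, w (K + 1) * (f K j * w (j + 1)) = a K * w K * w (K + 1) := by
        rw [← hr]
        refine Finset.sum_congr rfl fun j hj => ?_
        have hj : j < K := Finset.mem_range.1 hj
        have h1 : j ≠ K := by omega
        have h2 : K + 1 ≠ j := by omega
        simp only [f, if_neg h1, if_neg h1.symm, if_neg h2]
        by_cases h3 : j + 1 = K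
        · simp [h3]; ring
        · simp [h3]
      rw [Finset.sum_range_succ]
      simp only [Finset.sum_range_succ _ K, Finset.sum_add_distrib]
      rw [ih, hr, hl]
      simp only [qForm, Finset.sum_range_succ _ K]
      simp [f]
      ring
  have := hf M
  rw [wN, mul_zero, sub_zero] at this
  rw [← this, ← Fin.sum_univ_eq_sum_range
    (fun i => ∑ j ∈ Finset.range M, w (i + 1) * (f i j * w (j + 1)))]
  simp only [dotProduct, Matrix.mulVec]
  refine Finset.sum_congr rfl fun i _ => ?_
  rw [Finset.mul_sum, ← Fin.sum_univ_eq_sum_range (fun j => w (i + 1) * (f i j * w (j + 1)))]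
  rfl

lemma qForm_shift (M : ℕ) (a b w : ℕ → ℝ) (z : ℝ) :
    qForm M a (fun n => b n - z) w = qForm M a b w - z * ∑ n ∈ Finset.range M, w (n + 1) ^ 2 := by
  unfold qForm
  rw [Finset.mul_sum, ← Finset.sum_sub_distrib]
  refine Finset.sum_congr rfl fun n _ => ?_
  ring

lemma qForm_le_of_posSemidef {M : ℕ} {a1 b1 a2 b2 : ℤ → ℝ}
    (hJ : (jMatrix (M + 1) a1 b1 - jMatrix (M + 1) a2 b2).PosSemidef) (z : ℝ) (w : ℕ → ℝ)
    (w0 : w 0 = 0) (wN : w (M + 1) = 0) :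
    qForm M (fun n => a2 n) (fun n => b2 n - z) w ≤ qForm M (fun n => a1 n) (fun n => b1 n - z) w := by
  have h := hJ.dotProduct_mulVec_nonneg (fun i : Fin M => w (i + 1))
  rw [Matrix.sub_mulVec, dotProduct_sub, star_trivial, jMatrix_quad M a1 b1 w w0 wN,
    jMatrix_quad M a2 b2 w w0 wN] at h
  rw [qForm_shift M _ (fun n => b2 n), qForm_shift M _ (fun n => b1 n)]
  linarith

/-- The form of the reflected coefficients at `w` is the form at the reflection of `w`. -/
lemma qForm_reflect (M : ℕ) (a b : ℤ → ℝ) (z : ℝ) (w : ℕ → ℝ) (w0 : w 0 = 0)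
    (wN : w (M + 1) = 0) :
    qForm M (fun n => a ((M : ℤ) - n)) (fun n => b ((M : ℤ) + 1 - n) - z) w =
      qForm M (fun n => a n) (fun n => b n - z) (fun n => w (M + 1 - n)) := by
  let g : ℕ → ℝ := fun n => 2 * a n * w (M + 1 - n) * w (M - n)
  have hg : ∑ n ∈ Finset.range M, g (n + 1) = ∑ n ∈ Finset.range M, g n := by
    have h1 := Finset.sum_range_succ g M
    have h2 := Finset.sum_range_succ' g M
    have g0 : g 0 = 0 := by simp [g, wN]
    have gM : g M = 0 := by simp [g, w0]
    linarith
  have hR : qForm M (fun n => a n) (fun n => b n - z) (fun n => w (M + 1 - n)) =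
      ∑ n ∈ Finset.range M, ((b ((n + 1 : ℕ) : ℤ) - z) * w (M - n) ^ 2 + g n) := by
    rw [Finset.sum_add_distrib, ← hg, ← Finset.sum_add_distrib]
    unfold qForm
    refine Finset.sum_congr rfl fun n _ => ?_
    simp only [g]
    rw [show M + 1 - (n + 1) = M - n by omega, show M + 1 - (n + 2) = M - (n + 1) by omega]
  rw [hR, ← Finset.sum_range_reflect]
  unfold qForm
  refine Finset.sum_congr rfl fun n hn => ?_
  have hn : n < M := Finset.mem_range.1 hn
  simp only [g]
  rw [show M - (M - 1 - n) = n + 1 by omega, show M + 1 - (M - 1 - n) = n + 2 by omega,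
    show ((M - 1 - n + 1 : ℕ) : ℤ) = (M : ℤ) + 1 - ((n + 1 : ℕ) : ℤ) by omega,
    show ((M - 1 - n : ℕ) : ℤ) = (M : ℤ) - ((n + 1 : ℕ) : ℤ) by omega]
  ring

lemma dirSol_minus {a b u : ℤ → ℝ} {z : ℝ} (ha : ∀ n, a n < 0) (h : IsJSolution a b z u)
    (h0 : u 0 = 0) (M : ℕ) : DirSol M (fun n => a n) (fun n => b n - z) (fun n => u n) where
  neg n := ha n
  eqn n _ := by simpa using h.eqn n
  zero := by simpa using h0
  ne n _ hn := by simpa using h.no_double_zero ha n hn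

lemma dirSol_plus {a b u : ℤ → ℝ} {z : ℝ} (ha : ∀ n, a n < 0) (h : IsJSolution a b z u)
    (M : ℕ) (hN : u ((M : ℤ) + 1) = 0) :
    DirSol M (fun n => a ((M : ℤ) - n)) (fun n => b ((M : ℤ) + 1 - n) - z)
      (fun n => u ((M : ℤ) + 1 - n)) where
  neg n := ha _
  eqn n _ := by
    have := h.eqn ((M : ℤ) - n - 1)
    rw [show (M : ℤ) - n - 1 + 1 = M - n by ring, show (M : ℤ) - n - 1 + 2 = M + 1 - n by ring] at this
    push_cast
    rw [show (M : ℤ) - (n + 1) = M - n - 1 by ring, show (M : ℤ) + 1 - (n + 2) = M - n - 1 by ring,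
      show (M : ℤ) + 1 - (n + 1) = M - n by ring]
    linarith
  zero := by simpa using hN
  ne n _ hn h1 := by
    refine h.no_double_zero ha ((M : ℤ) + 1 - (n + 1 : ℕ)) h1 ?_
    rw [show (M : ℤ) + 1 - (n + 1 : ℕ) + 1 = M + 1 - n by push_cast; ring]
    exact hn

open Classical in
lemma sum_nodes (f : ℕ → ℝ) (M : ℕ) :
    ∑ k ∈ Finset.range (M + 1), (if f k = 0 ∨ f k * f (k + 1) < 0 then (1 : ℤ) else 0) =
      (if f 0 = 0 ∨ f 0 * f 1 < 0 then (1 : ℤ) else 0) + (nodeSet M f).card := by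
  induction M with
  | zero => rw [Finset.sum_range_one]; simp [nodeSet]
  | succ k ih =>
    rw [Finset.sum_range_succ, ih, nodeSet_succ]
    push_cast
    rw [add_assoc]

lemma sum_nodeInd_minus (u : ℤ → ℝ) (h0 : u 0 = 0) (M : ℕ) :
    ∑ k ∈ Finset.range (M + 1), nodeInd u k = 1 + (nodeSet M (fun n => u n)).card := by
  have := sum_nodes (fun n => u n) M
  simp only [Nat.cast_zero, h0, true_or, if_true] at this
  rw [← this]
  refine Finset.sum_congr rfl fun k _ => ?_
  simp [nodeInd]

open Classical in
lemma sum_nodeInd_plus (u : ℤ → ℝ) (M : ℕ) (hN : u ((M : ℤ) + 1) = 0) :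
    ∑ k ∈ Finset.range (M + 1), nodeInd u k =
      (nodeSet M (fun n => u ((M : ℤ) + 1 - n))).card + zeroInd (u 0) := by
  have h1 := sum_nodes (fun n => u ((M : ℤ) + 1 - n)) M
  simp only [Nat.cast_zero, sub_zero, hN, true_or, if_true] at h1
  rw [← Finset.sum_range_reflect] at h1
  -- zeros and strict sign changes are counted separately; only the former are shifted
  let s : ℕ → ℤ := fun k => if u k * u (k + 1) < 0 then 1 else 0
  have hu : ∀ k ∈ Finset.range (M + 1), nodeInd u k = zeroInd (u k) + s k := by
    intro k _
    unfold nodeInd zeroInd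
    by_cases z : u k = 0
    · simp [z, s]
    · simp [z, s]
  have hv : ∀ k ∈ Finset.range (M + 1),
      (if u ((M : ℤ) + 1 - (M + 1 - 1 - k : ℕ)) = 0 ∨
        u ((M : ℤ) + 1 - (M + 1 - 1 - k : ℕ)) * u ((M : ℤ) + 1 - (M + 1 - 1 - k + 1 : ℕ)) < 0
        then (1 : ℤ) else 0) = zeroInd (u ((k + 1 : ℕ) : ℤ)) + s k := by
    intro k hk
    have hk : k < M + 1 := Finset.mem_range.1 hk
    rw [show (M : ℤ) + 1 - (M + 1 - 1 - k : ℕ) = (k : ℤ) + 1 by omega,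
      show (M : ℤ) + 1 - (M + 1 - 1 - k + 1 : ℕ) = k by omega]
    unfold zeroInd
    by_cases z : u ((k : ℤ) + 1) = 0
    · simp [z, s]
    · simp [z, s, mul_comm]
  rw [Finset.sum_congr rfl hv, Finset.sum_add_distrib] at h1
  rw [Finset.sum_congr rfl hu, Finset.sum_add_distrib]
  have h2 := Finset.sum_range_succ (fun k : ℕ => zeroInd (u k)) (M + 1)
  have h3 := Finset.sum_range_succ' (fun k : ℕ => zeroInd (u k)) (M + 1)
  have hz : zeroInd (u ((M + 1 : ℕ) : ℤ)) = 1 := by simp [zeroInd, hN]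
  simp only [hz] at h2
  simp only [Nat.cast_zero] at h3
  linarith

/-! ### Boundary terms -/

lemma mul_signRep_nonneg (u : ℤ → ℝ) (n : ℤ) : 0 ≤ u n * signRep u n := by
  unfold signRep
  split_ifs with h
  · simp [h]
  · exact mul_self_nonneg _

lemma angleInd_left {a0 a1 u0 u1 : ℤ → ℝ} (ha0 : ∀ n, a0 n < 0) (n : ℤ) (h : u0 n = 0) :
    angleInd a0 a1 u0 u1 n = 0 := by
  unfold angleInd
  rw [if_neg]
  have e : jW a0 a1 u0 u1 n * (signRep u0 n * signRep u1 n) =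
      a0 n * (u0 (n + 1) ^ 2 * (u1 n * signRep u1 n)) := by
    simp only [jW, signRep, h, if_true]; ring
  rw [e, not_lt]
  exact mul_nonpos_of_nonpos_of_nonneg (ha0 n).le
    (mul_nonneg (sq_nonneg _) (mul_signRep_nonneg _ _))

lemma angleInd_right {a0 a1 u0 u1 : ℤ → ℝ} (ha1 : ∀ n, a1 n < 0) (n : ℤ) (h : u1 n = 0)
    (h' : u1 (n + 1) ≠ 0) : angleInd a0 a1 u0 u1 n = 1 - zeroInd (u0 n) := by
  have e : jW a0 a1 u0 u1 n * (signRep u0 n * signRep u1 n) =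
      -a1 n * (u1 (n + 1) ^ 2 * (u0 n * signRep u0 n)) := by
    simp only [jW, signRep, h, if_true]; ring
  unfold angleInd
  rw [e]
  by_cases z : u0 n = 0
  · simp [z, zeroInd]
  · have hs : signRep u0 n = u0 n := by simp [signRep, z]
    rw [hs, if_pos]
    · simp [zeroInd, z]
    · have := neg_pos.2 (ha1 n)
      have : 0 < u0 n * u0 n := mul_self_pos.2 z
      positivity

lemma zeroInd_jW_left {a0 a1 u0 u1 : ℤ → ℝ} (ha0 : ∀ n, a0 n < 0) (n : ℤ) (h : u0 n = 0)
    (h' : u0 (n + 1) ≠ 0) : zeroInd (jW a0 a1 u0 u1 n) = zeroInd (u1 n) := by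
  have := (ha0 n).ne
  simp [zeroInd, jW, h, h', this]

lemma zeroInd_jW_right {a0 a1 u0 u1 : ℤ → ℝ} (ha1 : ∀ n, a1 n < 0) (n : ℤ) (h : u1 n = 0)
    (h' : u1 (n + 1) ≠ 0) : zeroInd (jW a0 a1 u0 u1 n) = zeroInd (u0 n) := by
  have := (ha1 n).ne
  simp [zeroInd, jW, h, h', this]

lemma cntOC_eq (a0 a1 u0 u1 : ℤ → ℝ) (m n : ℤ) : cntOC a0 a1 u0 u1 m n =
    cntCC a0 a1 u0 u1 m n - zeroInd (jW a0 a1 u0 u1 m) := by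
  simp only [cntOC, zeroInd]

lemma cntCO_eq (a0 a1 u0 u1 : ℤ → ℝ) (m n : ℤ) : cntCO a0 a1 u0 u1 m n =
    cntCC a0 a1 u0 u1 m n + zeroInd (jW a0 a1 u0 u1 n) := by
  simp only [cntCO, zeroInd]

lemma cntOO_eq (a0 a1 u0 u1 : ℤ → ℝ) (m n : ℤ) : cntOO a0 a1 u0 u1 m n =
    cntCC a0 a1 u0 u1 m n - zeroInd (jW a0 a1 u0 u1 m) + zeroInd (jW a0 a1 u0 u1 n) := by
  simp only [cntOO, zeroInd]

/-- The count for `u_{0,+}` against `u_{j,-}`: the bracket depends on `u_{0,+}` only. -/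
lemma cntCC_plus_minus {a0 b0 a1 b1 u0 u1 : ℤ → ℝ} {z : ℝ} (ha0 : ∀ n, a0 n < 0)
    (ha1 : ∀ n, a1 n < 0) (h0 : IsJSolution a0 b0 z u0) (h1 : IsJSolution a1 b1 z u1)
    (M : ℕ) (hN : u0 ((M : ℤ) + 1) = 0) (hz : u1 0 = 0) :
    cntCC a0 a1 u0 u1 0 ((M : ℤ) + 1) = (nodeSet M (fun n => u1 n)).card
      + (zeroInd (u0 0) - ∑ k ∈ Finset.range (M + 1), nodeInd u0 k) := by
  have := cntCC_eq ha0 ha1 h0 h1 (M + 1)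
  push_cast at this
  rw [this, angleInd_left ha0 _ hN, angleInd_right ha1 0 hz (h1.no_double_zero ha1 0 hz),
    sum_nodeInd_minus u1 hz]
  ring

/-- The count for `u_{0,-}` against `u_{j,+}`, with `u_{j,+}` reflected to start with a zero. -/
lemma cntCC_minus_plus {a0 b0 a1 b1 u0 u1 : ℤ → ℝ} {z : ℝ} (ha0 : ∀ n, a0 n < 0)
    (ha1 : ∀ n, a1 n < 0) (h0 : IsJSolution a0 b0 z u0) (h1 : IsJSolution a1 b1 z u1)
    (M : ℕ) (hz : u0 0 = 0) (hN : u1 ((M : ℤ) + 1) = 0) :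
    cntCC a0 a1 u0 u1 0 ((M : ℤ) + 1) =
      (nodeSet M (fun n => u1 ((M : ℤ) + 1 - n))).card + zeroInd (u1 0)
      + (1 - zeroInd (u0 ((M : ℤ) + 1)) - ∑ k ∈ Finset.range (M + 1), nodeInd u0 k) := by
  have := cntCC_eq ha0 ha1 h0 h1 (M + 1)
  push_cast at this
  rw [this, angleInd_left ha0 _ hz, angleInd_right ha1 _ hN (h1.no_double_zero ha1 _ hN),
    sum_nodeInd_plus u1 M hN]
  ring

lemma nodes_mono_closed_int {M : ℕ} {a1 b1 u1 a2 b2 u2 : ℕ → ℝ} (h1 : DirSol M a1 b1 u1)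
    (h2 : DirSol M a2 b2 u2)
    (hQ : ∀ w : ℕ → ℝ, w 0 = 0 → w (M + 1) = 0 → qForm M a2 b2 w ≤ qForm M a1 b1 w) :
    ((nodeSet M u1).card : ℤ) + zeroInd (u1 (M + 1)) ≤
      (nodeSet M u2).card + zeroInd (u2 (M + 1)) := by
  have h := nodes_mono_closed h1 h2 hQ
  unfold zeroInd
  exact_mod_cast h

/-- Comparison Theorem for Wronskians I. -/
theorem stmt_17 (N : ℕ) (hN : 2 ≤ N)
    (a0 b0 a1 b1 a2 b2 : ℤ → ℝ)
    (ha0 : ∀ n : ℤ, a0 n < 0) (ha1 : ∀ n : ℤ, a1 n < 0) (ha2 : ∀ n : ℤ, a2 n < 0)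
    (hJ : (jMatrix N a1 b1 - jMatrix N a2 b2).PosSemidef)
    (lam : ℝ)
    (u0m u0p u1m u1p u2m u2p : ℤ → ℝ)
    (h0m : IsJSolution a0 b0 lam u0m) (h0m0 : u0m 0 = 0)
    (h0p : IsJSolution a0 b0 lam u0p) (h0pN : u0p (N : ℤ) = 0)
    (h1m : IsJSolution a1 b1 lam u1m) (h1m0 : u1m 0 = 0)
    (h1p : IsJSolution a1 b1 lam u1p) (h1pN : u1p (N : ℤ) = 0)
    (h2m : IsJSolution a2 b2 lam u2m) (h2m0 : u2m 0 = 0)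
    (h2p : IsJSolution a2 b2 lam u2p) (h2pN : u2p (N : ℤ) = 0) :
    (cntCC a0 a2 u0p u2m 0 (N : ℤ) ≥ cntCC a0 a1 u0p u1m 0 (N : ℤ)) ∧
    (cntCC a0 a2 u0m u2p 0 (N : ℤ) ≥ cntCC a0 a1 u0m u1p 0 (N : ℤ)) ∧
    (cntOC a0 a2 u0p u2m 0 (N : ℤ) ≥ cntOC a0 a1 u0p u1m 0 (N : ℤ)) ∧
    (cntOC a0 a2 u0m u2p 0 (N : ℤ) ≥ cntOC a0 a1 u0m u1p 0 (N : ℤ)) ∧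
    (cntCO a0 a2 u0p u2m 0 (N : ℤ) ≥ cntCO a0 a1 u0p u1m 0 (N : ℤ)) ∧
    (cntCO a0 a2 u0m u2p 0 (N : ℤ) ≥ cntCO a0 a1 u0m u1p 0 (N : ℤ)) ∧
    (cntOO a0 a2 u0p u2m 0 (N : ℤ) ≥ cntOO a0 a1 u0p u1m 0 (N : ℤ)) ∧
    (cntOO a0 a2 u0m u2p 0 (N : ℤ) ≥ cntOO a0 a1 u0m u1p 0 (N : ℤ)) := by
  obtain ⟨M, rfl⟩ : ∃ M, N = M + 1 := ⟨N - 1, by omega⟩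
  push_cast at *
  have hQ := fun w => qForm_le_of_posSemidef hJ lam w
  have D1 := dirSol_minus ha1 h1m h1m0 M
  have D2 := dirSol_minus ha2 h2m h2m0 M
  have E1 := dirSol_plus ha1 h1p M h1pN
  have E2 := dirSol_plus ha2 h2p M h2pN
  have hQr : ∀ w : ℕ → ℝ, w 0 = 0 → w (M + 1) = 0 →
      qForm M (fun n => a2 ((M : ℤ) - n)) (fun n => b2 ((M : ℤ) + 1 - n) - lam) w ≤
      qForm M (fun n => a1 ((M : ℤ) - n)) (fun n => b1 ((M : ℤ) + 1 - n) - lam) w := by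
    intro w w0 wN
    rw [qForm_reflect M a2 b2 lam w w0 wN, qForm_reflect M a1 b1 lam w w0 wN]
    exact hQ _ (by simpa using wN) (by simpa using w0)
  have A := nodes_mono D1 D2 hQ
  have B := nodes_mono_closed_int D1 D2 hQ
  have A' := nodes_mono E1 E2 hQr
  have B' := nodes_mono_closed_int E1 E2 hQr
  push_cast at B B'
  rw [sub_self] at B'
  have z0p := h0p.no_double_zero ha0 _ h0pN
  have z0m := h0m.no_double_zero ha0 _ h0m0
  have z1m := h1m.no_double_zero ha1 _ h1m0
  have z2m := h2m.no_double_zero ha2 _ h2m0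
  have z1p := h1p.no_double_zero ha1 _ h1pN
  have z2p := h2p.no_double_zero ha2 _ h2pN
  simp only [cntOC_eq, cntCO_eq, cntOO_eq,
    cntCC_plus_minus ha0 ha1 h0p h1m M h0pN h1m0, cntCC_plus_minus ha0 ha2 h0p h2m M h0pN h2m0,
    cntCC_minus_plus ha0 ha1 h0m h1p M h0m0 h1pN, cntCC_minus_plus ha0 ha2 h0m h2p M h0m0 h2pN,
    zeroInd_jW_left ha0 _ h0pN z0p, zeroInd_jW_left ha0 _ h0m0 z0m,
    zeroInd_jW_right ha1 _ h1m0 z1m, zeroInd_jW_right ha2 _ h2m0 z2m,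
    zeroInd_jW_right ha1 _ h1pN z1p, zeroInd_jW_right ha2 _ h2pN z2p]
  refine ⟨?_, ?_, ?_, ?_, ?_, ?_, ?_, ?_⟩ <;> omega
end
end

section
/- Triangle Inequality for Wronskians: For j = 0,1,2 let u_j be a solution of τ_j u = zu. Then for all integers m < n, |#_{[m,n]}(u_0,u_2) − (#_{[m,n]}(u_0,u_1) + #_{[m,n]}(u_1,u_2))| ≤ 1, and the same bound holds with #_{[m,n]} replaced by #_{(m,n]} throughout. -/
/-!
The weighted sign count of a Wronskian is a difference of values of `⌈Δ / π⌉`, where `Δ` is the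
difference of the Prüfer angles of the two solutions. The triangle inequality is therefore an
instance of `⌈x + y⌉ - ⌈x⌉ - ⌈y⌉ ∈ {-1, 0}`, evaluated at the two endpoints. This integer is
unchanged when `x` or `y` is shifted by an integer, so it only depends on the cyclic order of the
three lines spanned by `(u_j(n), a_j(n) u_j(n+1))`, and it can be read off from the signs of the
three Wronskians. The function `defect` below is this reading, so no angles are needed.

At a fixed site put `p_j = u_j(n+1)`. Then `#_n(u_i,u_j)` is the difference of the indicators of
`W_{n+1} p_i p_j > 0` and `W_n p_i p_j > 0` (`jSgn_eq`). Each of the two triples of indicators is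
tied to the `defect` of the corresponding triple of Wronskians by the same formula, whose correction
term depends only on which of the `p_j` vanish (`defect_eq`). Hence
`#_n(u₀,u₂) - #_n(u₀,u₁) - #_n(u₁,u₂)` is exactly the increment of `defect` from `n` to `n + 1`
(`jSgn_step`), and the sum telescopes to a difference of two numbers in `{-1, 0}`. For
`#_{(m,n]}` the boundary terms at `m` replace `defect` by its floor analogue, which again lies
in `{-1, 0}` (`defect_floor`).
-/


open Real

noncomputable section

open Classical in
/-- The indicator of `0 < x`. -/
def posInd (x : ℝ) : ℤ := if 0 < x then 1 else 0

open Classical in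
/-- The value of `⌈x + y⌉ - ⌈x⌉ - ⌈y⌉`, where `x`, `y` and `x + y` are the angles, in units of
`π`, from line 0 to 1, from 1 to 2 and from 0 to 2, expressed through the Wronskians `w01`, `w12`,
`w02`. The sign of the product encodes the cyclic order of the three lines. -/
def defect (w01 w12 w02 : ℝ) : ℤ :=
  if w01 = 0 ∨ w12 = 0 then 0 else if 0 ≤ w01 * w12 * w02 then -1 else 0

open Classical in
/-- The correction term in `defect_eq`; it depends only on which of its arguments vanish. -/
def zeroCorr (p0 p1 p2 : ℝ) : ℤ :=
  if p1 = 0 then (if p0 = 0 ∨ p2 = 0 then 0 else -1)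
  else if p0 = 0 ∧ p2 = 0 then -1 else 0

lemma defect_bounds (x y w : ℝ) : -1 ≤ defect x y w ∧ defect x y w ≤ 0 := by
  unfold defect; split_ifs <;> norm_num

lemma posInd_mul {c : ℝ} (hc : 0 < c) (x : ℝ) : posInd (c * x) = posInd x := by
  unfold posInd; simp [mul_pos_iff_of_pos_left hc]

/-- `defect_eq` for three lines of finite slope `t0`, `t1`, `t2`. -/
lemma defect_slopes (t0 t1 t2 : ℝ) :
    defect (t1 - t0) (t2 - t1) (t2 - t0) =
      posInd (t2 - t0) - posInd (t1 - t0) - posInd (t2 - t1) := by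
  unfold defect posInd
  rcases lt_trichotomy t0 t1 with h | h | h <;> rcases lt_trichotomy t1 t2 with h' | h' | h'
  · have : 0 < (t1 - t0) * (t2 - t1) * (t2 - t0) :=
      mul_pos (mul_pos (by linarith) (by linarith)) (by linarith)
    have h2 : t0 < t2 := by linarith
    simp [sub_eq_zero, h, h', h2, h.ne', h'.ne', this.le]
  · subst h'; simp [h]
  · have hn : (t1 - t0) * (t2 - t1) < 0 := mul_neg_of_pos_of_neg (by linarith) (by linarith)
    have : (0 ≤ (t1 - t0) * (t2 - t1) * (t2 - t0)) ↔ t2 ≤ t0 := by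
      constructor
      · intro h3; by_contra! h4; nlinarith
      · intro h3; exact mul_nonneg_of_nonpos_of_nonpos hn.le (by linarith)
    simp only [this, sub_eq_zero, h.ne', h'.ne, sub_pos, h, h'.not_gt]
    rcases le_or_gt t2 t0 with h3 | h3
    · simp [h3, h3.not_gt]
    · simp [h3, h3.not_ge]
  · subst h; simp
  · subst h; subst h'; simp
  · subst h; simp
  · have hn : (t1 - t0) * (t2 - t1) < 0 := mul_neg_of_neg_of_pos (by linarith) (by linarith)
    have : (0 ≤ (t1 - t0) * (t2 - t1) * (t2 - t0)) ↔ t2 ≤ t0 := by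
      constructor
      · intro h3; by_contra! h4; nlinarith
      · intro h3; exact mul_nonneg_of_nonpos_of_nonpos hn.le (by linarith)
    simp only [this, sub_eq_zero, h.ne, h'.ne', sub_pos, h', h.not_gt]
    rcases le_or_gt t2 t0 with h3 | h3
    · simp [h3, h3.not_gt]
    · simp [h3, h3.not_ge]
  · subst h'; simp [h.not_gt]
  · have hn : 0 < (t1 - t0) * (t2 - t1) := mul_pos_of_neg_of_neg (by linarith) (by linarith)
    have : ¬ (0 ≤ (t1 - t0) * (t2 - t1) * (t2 - t0)) := by
      have : t2 - t0 < 0 := by linarith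
      nlinarith
    have h2 : ¬ t0 < t2 := by linarith
    simp [this, h.not_gt, h'.not_gt, h2]

/-- Positive factors in the Wronskian product do not change `defect`. -/
lemma defect_congr {x y w x' y' w' c : ℝ} (hx : x = 0 ↔ x' = 0) (hy : y = 0 ↔ y' = 0)
    (hc : 0 < c) (h : x * y * w = c * (x' * y' * w')) : defect x y w = defect x' y' w' := by
  unfold defect
  simp only [hx, hy, h, mul_nonneg_iff_of_pos_left hc]

/-- The cyclic order of the three lines spanned by `(p_j, r_j)`, in terms of the pairwise
comparison of slopes. A line with `p_j = 0` has infinite slope, which is what `zeroCorr`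
accounts for. -/
lemma defect_eq (p0 p1 p2 r0 r1 r2 : ℝ) (h0 : p0 = 0 → r0 ≠ 0) (h1 : p1 = 0 → r1 ≠ 0)
    (h2 : p2 = 0 → r2 ≠ 0) :
    defect (p0 * r1 - p1 * r0) (p1 * r2 - p2 * r1) (p0 * r2 - p2 * r0) =
      posInd ((p0 * r2 - p2 * r0) * p0 * p2) - posInd ((p0 * r1 - p1 * r0) * p0 * p1)
        - posInd ((p1 * r2 - p2 * r1) * p1 * p2) + zeroCorr p0 p1 p2 := by
  by_cases e0 : p0 = 0 <;> by_cases e1 : p1 = 0 <;> by_cases e2 : p2 = 0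
  · simp [defect, posInd, zeroCorr, e0, e1, e2]
  · simp [defect, posInd, zeroCorr, e0, e1]
  · subst e0; subst e2
    simp [defect, posInd, zeroCorr, e1, h0 rfl, h2 rfl]
  · subst e0
    have hr : 0 < r0 ^ 2 := by have := h0 rfl; positivity
    have : (0 * r1 - p1 * r0) * (p1 * r2 - p2 * r1) * (0 * r2 - p2 * r0)
        = r0 ^ 2 * ((p1 * r2 - p2 * r1) * p1 * p2) := by ring
    unfold defect posInd zeroCorr
    rw [this]
    simp only [mul_nonneg_iff_of_pos_left hr]
    rcases lt_trichotomy ((p1 * r2 - p2 * r1) * p1 * p2) 0 with h | h | h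
    · simp [e1, e2, h.not_ge, h.not_gt]
    · have : p1 * r2 - p2 * r1 = 0 := by simpa [e1, e2] using h
      simp [this, e1, e2]
    · have : p1 * r2 - p2 * r1 ≠ 0 := by rintro h'; simp [h'] at h
      simp [h.le, h, this, e1, e2, h0 rfl]
  · simp [defect, posInd, zeroCorr, e1, e2]
  · subst e1
    have hr : 0 < r1 ^ 2 := by have := h1 rfl; positivity
    have : (p0 * r1 - 0 * r0) * (0 * r2 - p2 * r1) * (p0 * r2 - p2 * r0)
        = r1 ^ 2 * -((p0 * r2 - p2 * r0) * p0 * p2) := by ring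
    unfold defect posInd zeroCorr
    rw [this]
    simp only [mul_nonneg_iff_of_pos_left hr]
    rcases le_or_gt ((p0 * r2 - p2 * r0) * p0 * p2) 0 with h | h
    · simp [e0, e2, h, h.not_gt, h1 rfl]
    · simp [h.not_ge, h, e0, e2]
  · subst e2
    have hr : 0 < r2 ^ 2 := by have := h2 rfl; positivity
    have : (p0 * r1 - p1 * r0) * (p1 * r2 - 0 * r1) * (p0 * r2 - 0 * r0)
        = r2 ^ 2 * ((p0 * r1 - p1 * r0) * p0 * p1) := by ring
    unfold defect posInd zeroCorr
    rw [this]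
    simp only [mul_nonneg_iff_of_pos_left hr]
    rcases lt_trichotomy ((p0 * r1 - p1 * r0) * p0 * p1) 0 with h | h | h
    · simp [e0, e1, h.not_ge, h.not_gt]
    · have : p0 * r1 - p1 * r0 = 0 := by simpa [e0, e1] using h
      simp [this, e0, e1]
    · have : p0 * r1 - p1 * r0 ≠ 0 := by rintro h'; simp [h'] at h
      simp [h.le, h, this, e0, e1, h2 rfl]
  · obtain ⟨t0, rfl⟩ : ∃ t, r0 = p0 * t := ⟨r0 / p0, by field_simp⟩
    obtain ⟨t1, rfl⟩ : ∃ t, r1 = p1 * t := ⟨r1 / p1, by field_simp⟩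
    obtain ⟨t2, rfl⟩ : ∃ t, r2 = p2 * t := ⟨r2 / p2, by field_simp⟩
    have key : ∀ p q s t : ℝ, p * (q * t) - q * (p * s) = p * q * (t - s) := by
      intros; ring
    have key' : ∀ p q s : ℝ, p * q * s * p * q = (p * q) ^ 2 * s := by intros; ring
    have hz : zeroCorr p0 p1 p2 = 0 := by simp [zeroCorr, e0, e1]
    rw [hz, key, key, key, key', key', key', posInd_mul (by positivity),
      posInd_mul (by positivity), posInd_mul (by positivity), add_zero, ← defect_slopes]
    apply defect_congr (c := (p0 * p1 * p2) ^ 2)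
    · simp [e0, e1]
    · simp [e1, e2]
    · positivity
    · ring

lemma jSgn_eq_s19 (a0 a1 u0 u1 : ℤ → ℝ) (n : ℤ) :
    jSgn a0 a1 u0 u1 n = posInd (jW a0 a1 u0 u1 (n + 1) * u0 (n + 1) * u1 (n + 1))
      - posInd (jW a0 a1 u0 u1 n * u0 (n + 1) * u1 (n + 1)) := by
  unfold jSgn posInd
  generalize jW a0 a1 u0 u1 (n + 1) = w'
  generalize jW a0 a1 u0 u1 n = w
  rw [mul_assoc w', mul_assoc w]
  generalize u0 (n + 1) * u1 (n + 1) = p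
  have tri : ∀ x : ℝ, (x < 0 ∧ ¬ 0 < x ∧ x ≠ 0) ∨ x = 0 ∨ (0 < x ∧ ¬ x < 0 ∧ x ≠ 0) := by
    intro x
    rcases lt_trichotomy x 0 with h | h | h
    · exact Or.inl ⟨h, h.not_gt, h.ne⟩
    · exact Or.inr (Or.inl h)
    · exact Or.inr (Or.inr ⟨h, h.not_gt, h.ne'⟩)
  rcases tri p with hp | hp | hp <;> rcases tri w with h | h | h <;>
    rcases tri w' with h' | h' | h' <;> simp [hp, h, h', mul_pos_iff, mul_neg_iff]

/-- A solution does not vanish at two consecutive sites. -/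
lemma sol_ne {a b : ℤ → ℝ} {z : ℝ} {u : ℤ → ℝ} (ha : ∀ n, a n < 0) (h : IsJSolution a b z u)
    (n : ℤ) (hn : u n = 0) : u (n + 1) ≠ 0 := by
  intro hn1
  apply h.1
  have key : ∀ k : ℤ, u k = 0 ∧ u (k + 1) = 0 := by
    intro k
    induction k using Int.inductionOn' (b := n) with
    | zero => exact ⟨hn, hn1⟩
    | succ k _ ih =>
      refine ⟨ih.2, ?_⟩
      have := h.2 (k + 1)
      simpa [jTau, ih.1, ih.2, (ha _).ne] using this
    | pred k _ ih =>
      have := h.2 k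
      refine ⟨?_, by simpa using ih.1⟩
      simpa [jTau, ih.1, ih.2, (ha _).ne] using this
  funext k
  exact (key k).1

/-- The `defect` of the three Wronskians at site `n`. -/
def defectAt (a0 a1 a2 u0 u1 u2 : ℤ → ℝ) (n : ℤ) : ℤ :=
  defect (jW a0 a1 u0 u1 n) (jW a1 a2 u1 u2 n) (jW a0 a2 u0 u2 n)

section
variable {a0 b0 a1 b1 a2 b2 : ℤ → ℝ} {z : ℝ} {u0 u1 u2 : ℤ → ℝ}

lemma jSgn_step
    (ha0 : ∀ n : ℤ, a0 n < 0) (ha1 : ∀ n : ℤ, a1 n < 0) (ha2 : ∀ n : ℤ, a2 n < 0)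
    (h0 : IsJSolution a0 b0 z u0) (h1 : IsJSolution a1 b1 z u1)
    (h2 : IsJSolution a2 b2 z u2) (n : ℤ) :
    jSgn a0 a2 u0 u2 n - jSgn a0 a1 u0 u1 n - jSgn a1 a2 u1 u2 n =
      defectAt a0 a1 a2 u0 u1 u2 (n + 1) - defectAt a0 a1 a2 u0 u1 u2 n := by
  have nxt : ∀ {a b u : ℤ → ℝ}, (∀ n, a n < 0) → IsJSolution a b z u →
      u (n + 1) = 0 → a (n + 1) * u (n + 1 + 1) ≠ 0 := fun ha h e =>
    mul_ne_zero (ha _).ne (sol_ne ha h _ e)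
  have prv : ∀ {a b u : ℤ → ℝ}, (∀ n, a n < 0) → IsJSolution a b z u →
      a n * u (n + 1) = 0 → -u n ≠ 0 := fun {a b u} ha h e => by
    have e' : u (n + 1) = 0 := by simpa [(ha n).ne] using e
    intro hu
    exact absurd e' (sol_ne ha h n (by simpa using hu))
  -- The lines at `n + 1` are spanned by `(u_j(n+1), a_j(n+1) u_j(n+2))`.
  have E1 := defect_eq _ _ _ _ _ _ (nxt ha0 h0) (nxt ha1 h1) (nxt ha2 h2)
  -- Those at `n` are rotated to `(a_j(n) u_j(n+1), -u_j(n))`, which preserves the Wronskians and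
  -- gives both triples the same zero pattern of first coordinates.
  have E2 := defect_eq _ _ _ _ _ _ (prv ha0 h0) (prv ha1 h1) (prv ha2 h2)
  have w1 : ∀ a a' u u' : ℤ → ℝ, u (n + 1) * (a' (n + 1) * u' (n + 1 + 1))
      - u' (n + 1) * (a (n + 1) * u (n + 1 + 1)) = jW a a' u u' (n + 1) := by
    intros; unfold jW; ring
  have w2 : ∀ a a' u u' : ℤ → ℝ, a n * u (n + 1) * (-u' n) - a' n * u' (n + 1) * (-u n)
      = jW a a' u u' n := by
    intros; unfold jW; ring
  have w3 : ∀ a a' u u' : ℤ → ℝ, (∀ n, a n < 0) → (∀ n, a' n < 0) →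
      posInd (jW a a' u u' n * (a n * u (n + 1)) * (a' n * u' (n + 1)))
        = posInd (jW a a' u u' n * u (n + 1) * u' (n + 1)) := by
    intro a a' u u' ha ha'
    rw [← posInd_mul (mul_pos_of_neg_of_neg (ha n) (ha' n))
      (jW a a' u u' n * u (n + 1) * u' (n + 1))]
    congr 1; ring
  have hz : zeroCorr (a0 n * u0 (n + 1)) (a1 n * u1 (n + 1)) (a2 n * u2 (n + 1))
      = zeroCorr (u0 (n + 1)) (u1 (n + 1)) (u2 (n + 1)) := by
    simp [zeroCorr, (ha0 n).ne, (ha1 n).ne, (ha2 n).ne]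
  simp only [w1] at E1
  simp only [w2, hz] at E2
  rw [w3 _ _ _ _ ha0 ha2, w3 _ _ _ _ ha0 ha1, w3 _ _ _ _ ha1 ha2] at E2
  unfold defectAt
  rw [E1, E2, jSgn_eq_s19, jSgn_eq_s19, jSgn_eq_s19]
  ring

lemma cntCC_telescope
    (ha0 : ∀ n : ℤ, a0 n < 0) (ha1 : ∀ n : ℤ, a1 n < 0) (ha2 : ∀ n : ℤ, a2 n < 0)
    (h0 : IsJSolution a0 b0 z u0) (h1 : IsJSolution a1 b1 z u1)
    (h2 : IsJSolution a2 b2 z u2) (m n : ℤ) (hmn : m ≤ n) :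
    cntCC a0 a2 u0 u2 m n - (cntCC a0 a1 u0 u1 m n + cntCC a1 a2 u1 u2 m n) =
      defectAt a0 a1 a2 u0 u1 u2 n - defectAt a0 a1 a2 u0 u1 u2 m := by
  induction n, hmn using Int.leInduction with
  | base => simp [cntCC]
  | succ n hn ih =>
    have hI : ∀ f : ℤ → ℤ, ∑ j ∈ Finset.Ico m (n + 1), f j = ∑ j ∈ Finset.Ico m n, f j + f n := by
      intro f
      rw [← Finset.insert_Ico_right_eq_Ico_add_one hn,
        Finset.sum_insert Finset.right_notMem_Ico, add_comm]
    have := jSgn_step ha0 ha1 ha2 h0 h1 h2 n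
    unfold cntCC at ih ⊢
    rw [hI, hI, hI]
    linarith

open Classical in
/-- Adding the boundary terms of `#_{(m,n]}` turns `defect` into the corresponding expression
with floors, which lies in `{-1, 0}`. Lines 0 and 2 coincide if both coincide with line 1. -/
lemma defect_floor (ha1 : ∀ n : ℤ, a1 n < 0) (h1 : IsJSolution a1 b1 z u1) (m : ℤ) :
    let d := defectAt a0 a1 a2 u0 u1 u2 m + (if jW a0 a2 u0 u2 m = 0 then 1 else 0)
      - (if jW a0 a1 u0 u1 m = 0 then 1 else 0) - (if jW a1 a2 u1 u2 m = 0 then 1 else 0)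
    d ≤ 0 ∧ -1 ≤ d := by
  have tr : jW a0 a1 u0 u1 m = 0 → jW a1 a2 u1 u2 m = 0 → jW a0 a2 u0 u2 m = 0 := by
    unfold jW
    intro e e'
    by_cases hu : u1 m = 0
    · have hu' := mul_ne_zero (ha1 m).ne (sol_ne ha1 h1 m hu)
      apply mul_left_cancel₀ hu'
      linear_combination (a2 m * u2 (m + 1)) * e + (a0 m * u0 (m + 1)) * e'
    · apply mul_left_cancel₀ hu
      linear_combination (u2 m) * e + (u0 m) * e'
  intro d
  unfold d defectAt defect
  by_cases e : jW a0 a1 u0 u1 m = 0 <;> by_cases e' : jW a1 a2 u1 u2 m = 0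
  · simp [e, e', tr e e']
  all_goals
    simp only [e, e']
    by_cases e'' : jW a0 a2 u0 u2 m = 0
    · simp [e'']
    · simp only [e'']
      split_ifs <;> simp_all

end

/-- Triangle Inequality for Wronskians. -/
theorem stmt_19 (a0 b0 a1 b1 a2 b2 : ℤ → ℝ)
    (ha0 : ∀ n : ℤ, a0 n < 0) (ha1 : ∀ n : ℤ, a1 n < 0) (ha2 : ∀ n : ℤ, a2 n < 0)
    (z : ℝ) (u0 u1 u2 : ℤ → ℝ)
    (h0 : IsJSolution a0 b0 z u0) (h1 : IsJSolution a1 b1 z u1)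
    (h2 : IsJSolution a2 b2 z u2)
    (m n : ℤ) (hmn : m < n) :
    |cntCC a0 a2 u0 u2 m n - (cntCC a0 a1 u0 u1 m n + cntCC a1 a2 u1 u2 m n)| ≤ 1 ∧
    |cntOC a0 a2 u0 u2 m n - (cntOC a0 a1 u0 u1 m n + cntOC a1 a2 u1 u2 m n)| ≤ 1 := by
  have hc := cntCC_telescope ha0 ha1 ha2 h0 h1 h2 m n hmn.le
  obtain ⟨l1, l2⟩ := defect_bounds (jW a0 a1 u0 u1 n) (jW a1 a2 u1 u2 n) (jW a0 a2 u0 u2 n)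
  obtain ⟨l3, l4⟩ := defect_bounds (jW a0 a1 u0 u1 m) (jW a1 a2 u1 u2 m) (jW a0 a2 u0 u2 m)
  obtain ⟨l6, l5⟩ := defect_floor (a0 := a0) (a2 := a2) (u0 := u0) (u2 := u2) ha1 h1 m
  change -1 ≤ defectAt a0 a1 a2 u0 u1 u2 n at l1
  change defectAt a0 a1 a2 u0 u1 u2 n ≤ 0 at l2
  change -1 ≤ defectAt a0 a1 a2 u0 u1 u2 m at l3
  change defectAt a0 a1 a2 u0 u1 u2 m ≤ 0 at l4
  refine ⟨?_, ?_⟩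
  · rw [hc, abs_le]; constructor <;> linarith
  · unfold cntOC
    rw [abs_le]; constructor <;> linarith
end
end
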